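/- Let n ≥ 2, a = (a_1,…,a_n) ∈ ℂ^n and a' = (a'_1,…,a'_{n−1}) ∈ ℂ^{n−1} with every a_j and a'_k purely imaginary, and let s ∈ ℂ with Re(s) > 0. Then I_{n,n−1;a,a'}(s) = ∏_{1≤j≤n} ∏_{1≤k≤n−1} Γ_ℝ(s+a_j+a'_k). -/

import Mathlib

open MeasureTheory Complex

noncomputable section

/-- `Γ_ℝ(s) = π^{-s/2} Γ(s/2)`. -/
def GammaR (s : ℂ) : ℂ := (Real.pi : ℂ) ^ (-s / 2) * Complex.Gamma (s / 2)

/-- Modified Bessel function of the second kind, via its integral representation. -/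
def BesselK (ν : ℂ) (y : ℝ) : ℂ :=
  (1 / 2) * ∫ t in Set.Ioi (0 : ℝ),
    Complex.exp (-((y : ℂ) / 2) * ((t : ℂ) + 1 / (t : ℂ))) * (t : ℂ) ^ ν / (t : ℂ)

/-- Extend a finite real tuple to `ℕ`, defaulting to `1`. -/
def extR {k : ℕ} (t : Fin k → ℝ) : ℕ → ℝ := fun i => if h : i < k then t ⟨i, h⟩ else 1

/-- Extend a finite real tuple to `ℕ`, defaulting to `0`. -/
def extR0 {k : ℕ} (t : Fin k → ℝ) : ℕ → ℝ := fun i => if h : i < k then t ⟨i, h⟩ else 0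

/-- The positive orthant. -/
def posSet (k : ℕ) : Set (Fin k → ℝ) := {t | ∀ j, 0 < t j}

/-- `|a| = a_1 + ⋯ + a_n` (0-based indexing). -/
def sumA (n : ℕ) (a : ℕ → ℂ) : ℂ := ∑ j ∈ Finset.range n, a j

/-- `ã_j = a_{j+1} + a_1/(n-1)` (0-based indexing). -/
def tildeA (n : ℕ) (a : ℕ → ℂ) : ℕ → ℂ := fun j => a (j + 1) + a 0 / ((n : ℂ) - 1)

/-- The normalized radial part `Ŵ^A_{n,a}` of the class one `GL_n(ℝ)` Whittaker function,
as a function of `(y_1,…,y_{n-1})` (0-based indexing). -/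
def WhittAr : ℕ → (ℕ → ℂ) → (ℕ → ℝ) → ℂ
  | 0, _, _ => 1
  | 1, _, _ => 1
  | 2, a, y => 2 * ((y 0 : ℂ) ^ ((a 0 + a 1) / 2)) *
      BesselK ((a 0 - a 1) / 2) (2 * Real.pi * y 0)
  | (n + 3), a, y =>
      ∫ t in posSet (n + 2),
        WhittAr (n + 2) (tildeA (n + 3) a)
            (fun j => y (j + 1) * Real.sqrt (extR t (j + 1) / extR t j)) *
          (∏ j ∈ Finset.range (n + 2),
            Complex.exp (((-(Real.pi * y j) ^ 2 * extR t j - 1 / extR t j : ℝ) : ℂ)) *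
              ((Real.pi * y j : ℝ) : ℂ) ^ ((((n + 2 - j : ℕ) : ℂ) * a 0) / ((n + 2 : ℕ) : ℂ)) *
              ((extR t j : ℝ) : ℂ) ^ ((((n + 3 : ℕ) : ℂ) * a 0) / (2 * ((n + 2 : ℕ) : ℂ)))) *
          ((Real.pi * extR t (n + 1) : ℝ) : ℂ) ^ (-(sumA (n + 3) a) / 2) *
          (∏ j ∈ Finset.range (n + 2), ((extR t j : ℝ) : ℂ))⁻¹

/-- `Ŵ^A_{n,a}` as a function of the full tuple `(y_1,…,y_n)`. -/
def WhittAhat (n : ℕ) (a : ℕ → ℂ) (y : ℕ → ℝ) : ℂ :=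
  ((y (n - 1) : ℝ) : ℂ) ^ sumA n a * WhittAr n a y

/-- The Mellin transform `U_{n,a}` (0-based: `s j` stands for `s_{j+1}`). -/
def Ufun (n : ℕ) (a : ℕ → ℂ) (s : ℕ → ℂ) : ℂ :=
  ∫ y in posSet (n - 1),
    WhittAr n a (extR y) *
      ∏ j ∈ Finset.range (n - 1), ((extR y j : ℝ) : ℂ) ^ s j / ((extR y j : ℝ) : ℂ)

/-- The normalized radial part `Ŵ^B_{n,b}` of the class one `SO_{2n+1}(ℝ)` Whittaker function. -/
def WhittBr : ℕ → (ℕ → ℂ) → (ℕ → ℝ) → ℂ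
  | 0, _, _ => 1
  | 1, b, y => 2 * BesselK (b 0 / 2) (2 * Real.pi * y 0)
  | (n + 2), b, y =>
      ∫ p in (posSet (n + 2) ×ˢ posSet (n + 1)),
        WhittBr (n + 1) b
            (fun j =>
              if j < n then
                y (j + 1) *
                  Real.sqrt (extR p.1 (j + 1) * extR p.2 (j + 1) /
                    (extR p.1 (j + 2) * extR p.2 j))
              else y (n + 1) * Real.sqrt (extR p.1 (n + 1) / extR p.2 n)) *
          (∏ j ∈ Finset.range (n + 2),
            Complex.exp (((-(Real.pi * y j) ^ 2 * extR p.1 j - 1 / extR p.1 j : ℝ) : ℂ)) *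
              ((Real.pi * y j : ℝ) : ℂ) ^ b (n + 1)) *
          (∏ j ∈ Finset.range (n + 1),
            Complex.exp (((-(Real.pi * y j) ^ 2 * (extR p.1 j / extR p.1 (j + 1)) * extR p.2 j -
                  1 / extR p.2 j : ℝ) : ℂ)) *
              ((extR p.1 (j + 1) * extR p.2 j : ℝ) : ℂ) ^ (b (n + 1) / 2)) *
          ((extR p.1 0 : ℝ) : ℂ) ^ b (n + 1) *
          (∏ j ∈ Finset.range (n + 1), ((extR p.2 j : ℝ) : ℂ))⁻¹ *
          (∏ j ∈ Finset.range (n + 2), ((extR p.1 j : ℝ) : ℂ))⁻¹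

/-- The Mellin transform `V_{n,b}` (0-based: `s j` stands for `s_{j+1}`). -/
def Vfun (n : ℕ) (b : ℕ → ℂ) (s : ℕ → ℂ) : ℂ :=
  ∫ y in posSet n,
    WhittBr n b (extR y) *
      ∏ j ∈ Finset.range n, ((extR y j : ℝ) : ℂ) ^ s j / ((extR y j : ℝ) : ℂ)

/-- Integral over the vertical line `Re z = c`, i.e. `i·∫_ℝ f(c+it) dt`. -/
def VInt (c : ℝ) (f : ℂ → ℂ) : ℂ := Complex.I * ∫ t : ℝ, f (c + t * Complex.I)

/-- Iterated integral over `k` vertical lines with abscissas `c 0, …, c (k-1)`;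
the integrand is fed the contour points as a 0-based sequence. -/
def VIntK (k : ℕ) (c : ℕ → ℝ) (f : (ℕ → ℂ) → ℂ) : ℂ :=
  Complex.I ^ k * ∫ t : Fin k → ℝ, f (fun i => (c i : ℂ) + (extR0 t i : ℝ) * Complex.I)



/-- The archimedean `GL_n × GL_m` zeta integral (`m < n`) in torus coordinates. -/
def zetaGLm (n m : ℕ) (a a' : ℕ → ℂ) (s : ℂ) : ℂ :=
  (2 : ℂ) ^ m * ∫ y in posSet m,
    WhittAhat n a (extR y) * WhittAhat m a' (extR y) *
      ∏ j ∈ Finset.range m,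
        ((extR y j : ℝ) : ℂ) ^ (((j + 1 : ℕ) : ℂ) * s) / ((extR y j : ℝ) : ℂ)

/-- The kernel of the recursion for the Toda (class one Whittaker) functions, in logarithmic
coordinates. -/
def todaKernel (n : ℕ) (l : ℂ) (x : Fin (n + 1) → ℝ) (z : Fin n → ℝ) : ℂ :=
  cexp (l * ((∑ i, x i - ∑ i, z i : ℝ) : ℂ) -
    ((∑ i : Fin n, (Real.exp (x i.castSucc - z i) + Real.exp (z i - x i.succ)) : ℝ) : ℂ))

/-- The kernel of the Baxter operator. -/
def baxterKernel (n : ℕ) (l : ℂ) (x y : Fin n → ℝ) : ℂ :=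
  cexp (l * ((∑ i, x i - ∑ i, y i : ℝ) : ℂ) -
    ((∑ i : Fin n, (Real.exp (x i - y i) +
      if h : (i : ℕ) + 1 < n then Real.exp (y i - x ⟨i + 1, h⟩) else 0) : ℝ) : ℂ))

/-- The `GL_n` Toda function with spectral parameter `a`, in logarithmic coordinates. -/
def todaPsi : (n : ℕ) → (ℕ → ℂ) → (Fin n → ℝ) → ℂ
  | 0, _, _ => 1
  | n + 1, a, x => ∫ z : Fin n → ℝ, todaKernel n (a 0) x z * todaPsi n (fun j => a (j + 1)) z

lemma continuous_todaKernel (n : ℕ) (l : ℂ) :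
    Continuous (Function.uncurry (todaKernel n l)) := by
  unfold todaKernel Function.uncurry
  fun_prop

lemma continuous_baxterKernel (n : ℕ) (l : ℂ) :
    Continuous (Function.uncurry (baxterKernel n l)) := by
  unfold baxterKernel Function.uncurry
  refine continuous_exp.comp (Continuous.sub (by fun_prop) ?_)
  refine continuous_ofReal.comp (continuous_finsetSum _ fun i _ => Continuous.add (by fun_prop) ?_)
  split_ifs <;> fun_prop

lemma measurable_todaKernel_comp {n : ℕ} (l : ℂ) {X : Type*} [MeasurableSpace X]
    {f : X → Fin (n + 1) → ℝ} {g : X → Fin n → ℝ} (hf : Measurable f) (hg : Measurable g) :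
    Measurable fun t => todaKernel n l (f t) (g t) := by
  have h := (continuous_todaKernel n l).measurable.comp (hf.prodMk hg)
  simpa only [Function.comp_def, Function.uncurry_apply_pair] using h

lemma measurable_baxterKernel_comp {n : ℕ} (l : ℂ) {X : Type*} [MeasurableSpace X]
    {f g : X → Fin n → ℝ} (hf : Measurable f) (hg : Measurable g) :
    Measurable fun t => baxterKernel n l (f t) (g t) := by
  have h := (continuous_baxterKernel n l).measurable.comp (hf.prodMk hg)
  simpa only [Function.comp_def, Function.uncurry_apply_pair] using h

lemma measurable_todaPsi (n : ℕ) (a : ℕ → ℂ) : Measurable (todaPsi n a) := by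
  induction n generalizing a with
  | zero => exact measurable_const
  | succ n ih =>
    have h : StronglyMeasurable (Function.uncurry fun (x : Fin (n + 1) → ℝ) (z : Fin n → ℝ) =>
        todaKernel n (a 0) x z * todaPsi n (fun j => a (j + 1)) z) :=
      ((continuous_todaKernel n (a 0)).measurable.mul
        ((ih _).comp measurable_snd)).stronglyMeasurable
    exact h.integral_prod_right.measurable

lemma cexp_ofReal_sub_norm (l : ℂ) (u v : ℝ) :
    ((‖cexp (l * u - v)‖ : ℝ) : ℂ) = cexp ((l.re : ℂ) * u - v) := by
  rw [Complex.norm_exp, ofReal_exp]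
  simp

lemma norm_todaKernel (n : ℕ) (l : ℂ) (x : Fin (n + 1) → ℝ) (z : Fin n → ℝ) :
    ((‖todaKernel n l x z‖ : ℝ) : ℂ) = todaKernel n l.re x z :=
  cexp_ofReal_sub_norm _ _ _

lemma norm_baxterKernel (n : ℕ) (l : ℂ) (x y : Fin n → ℝ) :
    ((‖baxterKernel n l x y‖ : ℝ) : ℂ) = baxterKernel n l.re x y :=
  cexp_ofReal_sub_norm _ _ _

lemma norm_todaKernel_re (n : ℕ) (l : ℂ) (x : Fin (n + 1) → ℝ) (z : Fin n → ℝ) :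
    ‖todaKernel n l.re x z‖ = ‖todaKernel n l x z‖ := by
  rw [← norm_todaKernel, norm_real, norm_norm]

lemma norm_baxterKernel_re (n : ℕ) (l : ℂ) (x y : Fin n → ℝ) :
    ‖baxterKernel n l.re x y‖ = ‖baxterKernel n l x y‖ := by
  rw [← norm_baxterKernel, norm_real, norm_norm]

lemma exp_neg_exp_le (k : ℕ) (u : ℝ) :
    Real.exp (-Real.exp u) ≤ k.factorial * Real.exp (-(k * u)) := by
  have h := Real.pow_div_factorial_le_exp (Real.exp u) (Real.exp_pos u).le k
  rw [← Real.exp_nat_mul] at h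
  rw [Real.exp_neg, Real.exp_neg, ← div_eq_mul_inv]
  rw [inv_eq_one_div, div_le_div_iff₀ (Real.exp_pos _) (Real.exp_pos _)]
  rw [div_le_iff₀ (by positivity)] at h
  linarith

lemma exp_neg_exp_add_exp_le (k : ℕ) (p q w : ℝ) :
    Real.exp (-(Real.exp (p - w) + Real.exp (w - q))) ≤
      k.factorial * Real.exp (k * (|p| + |q|) - k * |w|) := by
  have hk : (0 : ℝ) ≤ k := Nat.cast_nonneg k
  have key : ∀ u : ℝ, |w| - (|p| + |q|) ≤ u → Real.exp u ≤ Real.exp (p - w) + Real.exp (w - q) →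
      Real.exp (-(Real.exp (p - w) + Real.exp (w - q))) ≤
        k.factorial * Real.exp (k * (|p| + |q|) - k * |w|) := by
    intro u hu hu'
    calc _ ≤ Real.exp (-Real.exp u) := Real.exp_le_exp.2 (by linarith)
      _ ≤ _ := exp_neg_exp_le k u
      _ ≤ _ := by
        gcongr
        nlinarith
  rcases le_total 0 w with hw | hw
  · refine key (w - q) ?_ (by linarith [Real.exp_pos (p - w)])
    rw [abs_of_nonneg hw]
    linarith [abs_nonneg p, le_abs_self q]
  · refine key (p - w) ?_ (by linarith [Real.exp_pos (w - q)])
    rw [abs_of_nonpos hw]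
    linarith [abs_nonneg q, neg_abs_le p]

lemma norm_todaKernel_le (n k : ℕ) (l : ℂ) (x : Fin (n + 1) → ℝ) (z : Fin n → ℝ) :
    ‖todaKernel n l x z‖ ≤ (k.factorial : ℝ) ^ n *
      Real.exp ((|l.re| + 2 * k) * ∑ i, |x i| + (|l.re| - k) * ∑ i, |z i|) := by
  have hk : (0 : ℝ) ≤ k := Nat.cast_nonneg k
  have h1 : ‖todaKernel n l x z‖ = Real.exp (l.re * (∑ i, x i - ∑ i, z i)) *
      ∏ i : Fin n, Real.exp (-(Real.exp (x i.castSucc - z i) + Real.exp (z i - x i.succ))) := by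
    rw [todaKernel, Complex.norm_exp, ← Real.exp_sum, ← Real.exp_add]
    congr 1
    rw [Complex.sub_re, Complex.re_mul_ofReal, ofReal_re, Finset.sum_neg_distrib, sub_eq_add_neg]
  rw [h1]
  have h2 : ∏ i : Fin n, Real.exp (-(Real.exp (x i.castSucc - z i) + Real.exp (z i - x i.succ)))
      ≤ ∏ i : Fin n, ((k.factorial : ℝ) *
        Real.exp (k * (|x i.castSucc| + |x i.succ|) - k * |z i|)) :=
    Finset.prod_le_prod (fun _ _ => (Real.exp_pos _).le)
      fun i _ => exp_neg_exp_add_exp_le k _ _ _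
  rw [Finset.prod_mul_distrib, ← Real.exp_sum Finset.univ (fun i : Fin n => _ - _),
    Finset.prod_const, Finset.card_univ, Fintype.card_fin] at h2
  have h3 : l.re * (∑ i, x i - ∑ i, z i) ≤ |l.re| * (∑ i, |x i| + ∑ i, |z i|) := by
    calc _ ≤ |l.re * (∑ i, x i - ∑ i, z i)| := le_abs_self _
      _ = |l.re| * |∑ i, x i - ∑ i, z i| := abs_mul _ _
      _ ≤ _ := by
        gcongr
        exact (abs_sub _ _).trans
          (add_le_add (Finset.abs_sum_le_sum_abs _ _) (Finset.abs_sum_le_sum_abs _ _))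
  have h4 : ∑ i : Fin n, |x i.castSucc| ≤ ∑ i, |x i| := by
    rw [Fin.sum_univ_castSucc]
    linarith [abs_nonneg (x (Fin.last n))]
  have h5 : ∑ i : Fin n, |x i.succ| ≤ ∑ i, |x i| := by
    rw [Fin.sum_univ_succ (fun i => |x i|)]
    linarith [abs_nonneg (x 0)]
  calc _ ≤ Real.exp (|l.re| * (∑ i, |x i| + ∑ i, |z i|)) * ((k.factorial : ℝ) ^ n *
        Real.exp (∑ i : Fin n, (k * (|x i.castSucc| + |x i.succ|) - k * |z i|))) := by
        gcongr
    _ = (k.factorial : ℝ) ^ n * Real.exp (|l.re| * (∑ i, |x i| + ∑ i, |z i|) +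
        ∑ i : Fin n, (k * (|x i.castSucc| + |x i.succ|) - k * |z i|)) := by
        rw [Real.exp_add]; ring
    _ ≤ _ := by
        refine mul_le_mul_of_nonneg_left (Real.exp_le_exp.2 ?_) (by positivity)
        rw [Finset.sum_sub_distrib, ← Finset.mul_sum, ← Finset.mul_sum, Finset.sum_add_distrib]
        nlinarith [mul_le_mul_of_nonneg_left h4 hk, mul_le_mul_of_nonneg_left h5 hk]

lemma integrable_exp_neg_sum_abs (n : ℕ) :
    Integrable fun z : Fin n → ℝ => Real.exp (-∑ i, |z i|) := by
  have h : Integrable fun w : ℝ => Real.exp (-|w|) := by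
    rw [← integrableOn_univ, ← Set.Iic_union_Ioi (a := (0 : ℝ))]
    refine IntegrableOn.union ?_ ?_
    · refine (integrableOn_exp_Iic 0).congr_fun (fun w hw => ?_) measurableSet_Iic
      simp only [abs_of_nonpos (Set.mem_Iic.1 hw), neg_neg]
    · refine (integrableOn_exp_neg_Ioi 0).congr_fun (fun w hw => ?_) measurableSet_Ioi
      simp only [abs_of_pos (Set.mem_Ioi.1 hw)]
  have : Integrable fun z : Fin n → ℝ => ∏ i, Real.exp (-|z i|) :=
    Integrable.fintype_prod (f := fun _ (w : ℝ) => Real.exp (-|w|)) fun _ => h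
  refine this.congr (Filter.Eventually.of_forall fun z => ?_)
  simp [← Real.exp_sum]

lemma integrable_todaKernel_mul_of_bound {n : ℕ} (l : ℂ) {f : (Fin n → ℝ) → ℂ}
    (hf : Measurable f) {C : ℝ} {c : ℕ} (hC : ∀ z, ‖f z‖ ≤ C * Real.exp (c * ∑ i, |z i|)) :
    ∃ (C' : ℝ) (c' : ℕ), ∀ x, Integrable (fun z => todaKernel n l x z * f z) ∧
      ‖∫ z, todaKernel n l x z * f z‖ ≤ C' * Real.exp (c' * ∑ i, |x i|) := by
  obtain ⟨k, hk⟩ := exists_nat_ge (|l.re| + c + 1)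
  obtain ⟨m, hm⟩ := exists_nat_ge (|l.re| + 2 * k)
  have hC0 : 0 ≤ C := by
    have := (norm_nonneg _).trans (hC 0)
    simpa using this
  have bound : ∀ x z, ‖todaKernel n l x z * f z‖ ≤
      ((k.factorial : ℝ) ^ n * C * Real.exp (m * ∑ i, |x i|)) * Real.exp (-∑ i, |z i|) := by
    intro x z
    have hx : 0 ≤ ∑ i, |x i| := Finset.sum_nonneg fun _ _ => abs_nonneg _
    have hz : 0 ≤ ∑ i, |z i| := Finset.sum_nonneg fun _ _ => abs_nonneg _
    calc _ = ‖todaKernel n l x z‖ * ‖f z‖ := norm_mul _ _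
      _ ≤ ((k.factorial : ℝ) ^ n *
          Real.exp ((|l.re| + 2 * k) * ∑ i, |x i| + (|l.re| - k) * ∑ i, |z i|)) *
          (C * Real.exp (c * ∑ i, |z i|)) := by
        gcongr
        · exact norm_todaKernel_le n k l x z
        · exact hC z
      _ = ((k.factorial : ℝ) ^ n * C) *
          Real.exp ((|l.re| + 2 * k) * ∑ i, |x i| + (|l.re| - k + c) * ∑ i, |z i|) := by
        rw [add_mul (_ - _), ← add_assoc, Real.exp_add _ (c * _)]; ring
      _ ≤ ((k.factorial : ℝ) ^ n * C) * Real.exp (m * ∑ i, |x i| + -∑ i, |z i|) := by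
        gcongr
        nlinarith
      _ = _ := by rw [Real.exp_add]; ring
  refine ⟨((k.factorial : ℝ) ^ n * C) * ∫ z : Fin n → ℝ, Real.exp (-∑ i, |z i|), m, fun x => ?_⟩
  have hint := (integrable_exp_neg_sum_abs n).const_mul
    ((k.factorial : ℝ) ^ n * C * Real.exp (m * ∑ i, |x i|))
  refine ⟨hint.mono' ?_ (Filter.Eventually.of_forall (bound x)), ?_⟩
  · exact ((measurable_todaKernel_comp l measurable_const measurable_id).mul
      hf).aestronglyMeasurable
  · refine (norm_integral_le_of_norm_le hint (Filter.Eventually.of_forall (bound x))).trans ?_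
    rw [integral_const_mul]
    exact le_of_eq (by ring)

lemma norm_todaPsi_le (n : ℕ) (a : ℕ → ℂ) :
    ∃ (C : ℝ) (c : ℕ), ∀ x, ‖todaPsi n a x‖ ≤ C * Real.exp (c * ∑ i, |x i|) := by
  induction n generalizing a with
  | zero => exact ⟨1, 0, fun x => by simp [todaPsi]⟩
  | succ n ih =>
    obtain ⟨C, c, h⟩ := ih fun j => a (j + 1)
    obtain ⟨C', c', h'⟩ := integrable_todaKernel_mul_of_bound (a 0) (measurable_todaPsi n _) h
    exact ⟨C', c', fun x => (h' x).2⟩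

lemma integrable_todaKernel_mul_todaPsi (n : ℕ) (l : ℂ) (a : ℕ → ℂ) (x : Fin (n + 1) → ℝ) :
    Integrable fun z => todaKernel n l x z * todaPsi n a z := by
  obtain ⟨C, c, h⟩ := norm_todaPsi_le n a
  obtain ⟨C', c', h'⟩ := integrable_todaKernel_mul_of_bound l (measurable_todaPsi n a) h
  exact (h' x).1

lemma ofReal_norm_todaPsi_re (n : ℕ) (a : ℕ → ℂ) (x : Fin n → ℝ) :
    ((‖todaPsi n (fun j => (a j).re) x‖ : ℝ) : ℂ) = todaPsi n (fun j => (a j).re) x := by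
  induction n generalizing a with
  | zero => simp [todaPsi]
  | succ n ih =>
    have h : todaPsi (n + 1) (fun j => (a j).re) x =
        ((∫ z, ‖todaKernel n (a 0) x z‖ * ‖todaPsi n (fun j => (a (j + 1)).re) z‖ : ℝ) : ℂ) := by
      rw [todaPsi, ← integral_complex_ofReal]
      congr 1; ext z
      rw [ofReal_mul, norm_todaKernel, ih fun j => a (j + 1)]
    rw [h, norm_real, Real.norm_of_nonneg]
    exact integral_nonneg fun z => by positivity

lemma norm_todaPsi_succ_re (n : ℕ) (a : ℕ → ℂ) (x : Fin (n + 1) → ℝ) :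
    ‖todaPsi (n + 1) (fun j => (a j).re) x‖ =
      ∫ z, ‖todaKernel n (a 0) x z‖ * ‖todaPsi n (fun j => (a (j + 1)).re) z‖ := by
  apply ofReal_injective
  rw [ofReal_norm_todaPsi_re, todaPsi, ← integral_complex_ofReal]
  congr 1; ext z
  rw [ofReal_mul, norm_todaKernel, ofReal_norm_todaPsi_re n fun j => a (j + 1)]

lemma norm_todaPsi_le_re (n : ℕ) (a : ℕ → ℂ) (x : Fin n → ℝ) :
    ‖todaPsi n a x‖ ≤ ‖todaPsi n (fun j => (a j).re) x‖ := by
  induction n generalizing a with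
  | zero => simp [todaPsi]
  | succ n ih =>
    rw [norm_todaPsi_succ_re, todaPsi]
    refine norm_integral_le_of_norm_le ?_ (Filter.Eventually.of_forall fun z => ?_)
    · have := (integrable_todaKernel_mul_todaPsi n ((a 0).re : ℂ) (fun j => (a (j + 1)).re) x).norm
      refine this.congr (Filter.Eventually.of_forall fun z => ?_)
      simp only [norm_mul, norm_todaKernel_re]
    · rw [norm_mul]
      gcongr
      exact ih _ z

/-- Fubini for an eigenfunction-type identity `∫ K(x,y) f(x) dx = h(y)`. -/
lemma integral_mul_integral_kernel {X Y : Type*} [MeasurableSpace X] [MeasurableSpace Y]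
    {μ : Measure X} {ν : Measure Y} [SFinite μ] [SFinite ν] {K : X → Y → ℂ} {f : X → ℂ}
    {g h H : Y → ℂ} (hK : Measurable (Function.uncurry K)) (hf : Measurable f)
    (hg : Measurable g) (heq : ∀ y, Integrable (fun x => K x y * f x) μ ∧
      ∫ x, K x y * f x ∂μ = h y)
    (hnorm : ∀ y, (∫ x, ‖K x y * f x‖ ∂μ) * ‖g y‖ ≤ ‖H y‖) (hH : Integrable H ν) :
    Integrable (fun x => f x * ∫ y, K x y * g y ∂ν) μ ∧
      ∫ x, f x * ∫ y, K x y * g y ∂ν ∂μ = ∫ y, h y * g y ∂ν := by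
  have hm : Measurable (Function.uncurry fun x y => K x y * f x * g y) :=
    (hK.mul (hf.comp measurable_fst)).mul (hg.comp measurable_snd)
  have hF : Integrable (Function.uncurry fun x y => K x y * f x * g y) (μ.prod ν) := by
    rw [integrable_prod_iff' hm.aestronglyMeasurable]
    refine ⟨Filter.Eventually.of_forall fun y => (heq y).1.mul_const (g y), ?_⟩
    refine hH.norm.mono' ?_ (Filter.Eventually.of_forall fun y => ?_)
    · exact hm.norm.stronglyMeasurable.integral_prod_left'.aestronglyMeasurable
    · rw [Real.norm_of_nonneg (integral_nonneg fun _ => norm_nonneg _)]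
      simp only [Function.uncurry_apply_pair, norm_mul _ (g y)]
      rw [integral_mul_const]
      exact hnorm y
  have e : ∀ x, f x * ∫ y, K x y * g y ∂ν = ∫ y, K x y * f x * g y ∂ν := by
    intro x
    rw [← integral_const_mul]
    congr 1; ext y; ring
  simp only [e]
  refine ⟨hF.integral_prod_left, ?_⟩
  rw [integral_integral_swap hF]
  congr 1; ext y
  rw [integral_mul_const, (heq y).2]

lemma integral_norm_le_norm_integral {X : Type*} [MeasurableSpace X] {μ : Measure X}
    {f F : X → ℂ} (hF : Integrable F μ) (hle : ∀ x, ‖f x‖ ≤ ‖F x‖)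
    (hpos : ∀ x, ((‖F x‖ : ℝ) : ℂ) = F x) : ∫ x, ‖f x‖ ∂μ ≤ ‖∫ x, F x ∂μ‖ := by
  have h : ∫ x, F x ∂μ = ((∫ x, ‖F x‖ ∂μ : ℝ) : ℂ) := by
    rw [← integral_complex_ofReal]
    simp only [hpos]
  rw [h, norm_real, Real.norm_of_nonneg (integral_nonneg fun _ => norm_nonneg _)]
  exact integral_mono_of_nonneg (Filter.Eventually.of_forall fun _ => norm_nonneg _) hF.norm
    (Filter.Eventually.of_forall hle)

lemma integral_exp_image {E : Type*} [NormedAddCommGroup E] [NormedSpace ℝ E] (f : ℝ → E) :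
    (IntegrableOn f (Set.Ioi 0) ↔ Integrable fun x => Real.exp x • f (Real.exp x)) ∧
      ∫ t in Set.Ioi 0, f t = ∫ x, Real.exp x • f (Real.exp x) := by
  have hd : ∀ x ∈ (Set.univ : Set ℝ), HasDerivWithinAt Real.exp (Real.exp x) Set.univ x :=
    fun x _ => (Real.hasDerivAt_exp x).hasDerivWithinAt
  have h1 := integrableOn_image_iff_integrableOn_abs_deriv_smul MeasurableSet.univ hd
    Real.exp_injective.injOn f
  have h2 := integral_image_eq_integral_abs_deriv_smul MeasurableSet.univ hd
    Real.exp_injective.injOn f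
  simpa [Set.image_univ, Real.range_exp, Real.abs_exp] using And.intro h1 h2

lemma integral_cexp_sub_exp {l : ℂ} (hl : 0 < l.re) :
    Integrable (fun x : ℝ => cexp (l * x - (Real.exp x : ℝ))) ∧
      ∫ x : ℝ, cexp (l * x - (Real.exp x : ℝ)) = Complex.Gamma l := by
  have h := integral_exp_image fun t : ℝ => ((Real.exp (-t) : ℝ) : ℂ) * (t : ℂ) ^ (l - 1)
  have e : ∀ x : ℝ, Real.exp x • (((Real.exp (-Real.exp x) : ℝ) : ℂ) *
      ((Real.exp x : ℝ) : ℂ) ^ (l - 1)) = cexp (l * x - (Real.exp x : ℝ)) := by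
    intro x
    rw [cpow_def_of_ne_zero (by exact_mod_cast (Real.exp_pos x).ne'),
      ← ofReal_log (Real.exp_pos x).le, Real.log_exp, real_smul, ofReal_exp (-_), ofReal_exp x,
      ← Complex.exp_add, ← Complex.exp_add]
    congr 1
    push_cast
    ring
  simp only [e] at h
  exact ⟨h.1.1 (Complex.GammaIntegral_convergent hl), by
    rw [Complex.Gamma_eq_integral hl, Complex.GammaIntegral, h.2]⟩

lemma integral_cexp_sub_mul_exp {l : ℂ} (hl : 0 < l.re) {A : ℝ} (hA : 0 < A) :
    Integrable (fun x : ℝ => cexp (l * x - (A * Real.exp x : ℝ))) ∧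
      ∫ x : ℝ, cexp (l * x - (A * Real.exp x : ℝ)) =
        cexp (-(l * Real.log A)) * Complex.Gamma l := by
  obtain ⟨h1, h2⟩ := integral_cexp_sub_exp hl
  have e : ∀ x : ℝ, cexp (l * x - (A * Real.exp x : ℝ)) = cexp (-(l * Real.log A)) *
      (fun x : ℝ => cexp (l * x - (Real.exp x : ℝ))) (x + Real.log A) := by
    intro x
    simp only
    rw [← Complex.exp_add, Real.exp_add, Real.exp_log hA]
    congr 1
    push_cast
    ring
  simp only [e]
  refine ⟨(h1.comp_add_right _).const_mul _, ?_⟩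
  rw [integral_const_mul, integral_add_right_eq_self (fun x : ℝ => cexp (l * x - (Real.exp x : ℝ))),
    h2]

lemma integrable_cexp_sub {l : ℂ} {A B : ℝ} (hA : 0 < A) (hB : 0 ≤ B) (h : 0 < B ∨ 0 < l.re) :
    Integrable fun x : ℝ => cexp (l * x - (A * Real.exp x + B * Real.exp (-x) : ℝ)) := by
  have hm : AEStronglyMeasurable
      (fun x : ℝ => cexp (l * x - (A * Real.exp x + B * Real.exp (-x) : ℝ))) :=
    Continuous.aestronglyMeasurable (by fun_prop)
  rcases h with hB | hl
  · obtain ⟨k, hk⟩ := exists_nat_gt (-l.re)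
    have h0 : 0 < (l + k).re := by simp; linarith
    refine ((integral_cexp_sub_mul_exp h0 hA).1.norm.const_mul
      (k.factorial * Real.exp (-(k * Real.log B)))).mono' hm (Filter.Eventually.of_forall fun x => ?_)
    have := exp_neg_exp_le k (Real.log B - x)
    rw [sub_eq_add_neg, Real.exp_add, Real.exp_log hB] at this
    rw [Complex.norm_exp, Complex.norm_exp]
    calc _ = Real.exp (-(B * Real.exp (-x))) * Real.exp (l.re * x - A * Real.exp x) := by
          rw [← Real.exp_add]
          congr 1
          simp only [sub_re, re_mul_ofReal, ofReal_re]
          ring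
      _ ≤ k.factorial * Real.exp (-(k * (Real.log B + -x))) *
          Real.exp (l.re * x - A * Real.exp x) := by gcongr
      _ = _ := by
          rw [mul_assoc, mul_assoc, ← Real.exp_add, ← Real.exp_add]
          congr 2
          simp only [sub_re, re_mul_ofReal, ofReal_re, add_re, natCast_re]
          ring
  · refine (integral_cexp_sub_mul_exp hl hA).1.norm.mono' hm
      (Filter.Eventually.of_forall fun x => ?_)
    rw [Complex.norm_exp, Complex.norm_exp]
    apply Real.exp_le_exp.2
    simp only [sub_re, re_mul_ofReal, ofReal_re]
    nlinarith [Real.exp_pos (-x)]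

lemma integral_cexp_sub_symm (l : ℂ) {A B : ℝ} (hA : 0 < A) (hB : 0 < B) :
    ∫ x : ℝ, cexp (l * x - (A * Real.exp x + B * Real.exp (-x) : ℝ)) =
      cexp (l * (Real.log B - Real.log A : ℝ)) *
        ∫ x : ℝ, cexp (-l * x - (A * Real.exp x + B * Real.exp (-x) : ℝ)) := by
  rw [← integral_const_mul, ← integral_sub_left_eq_self _ _ (Real.log B - Real.log A)]
  congr 1; ext x
  rw [← Complex.exp_add]
  congr 1
  have h1 : A * Real.exp (Real.log B - Real.log A - x) = B * Real.exp (-x) := by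
    rw [sub_eq_add_neg, Real.exp_add, Real.exp_sub, Real.exp_log hA, Real.exp_log hB]
    field_simp
  have h2 : B * Real.exp (-(Real.log B - Real.log A - x)) = A * Real.exp x := by
    rw [neg_sub, sub_eq_add_neg, Real.exp_add, neg_sub, Real.exp_sub, Real.exp_log hA,
      Real.exp_log hB]
    field_simp
  rw [h1, h2]
  push_cast
  ring

lemma exists_baxterKernel_mul_todaKernel_eq_prod (n : ℕ) (y : Fin (n + 1) → ℝ) (z : Fin n → ℝ) :
    ∃ (A B : Fin (n + 1) → ℝ), (∀ i, 0 < A i) ∧ B 0 = 0 ∧ (∀ i : Fin n, 0 < B i.succ) ∧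
      (∀ i : Fin n, Real.log (B i.succ) = y i.castSucc + z i + Real.log (A i.castSucc)) ∧
      Real.log (A (Fin.last n)) = - y (Fin.last n) ∧
      (∀ l m x, baxterKernel (n + 1) m x y * todaKernel n l x z =
        cexp (-(m * (∑ i, y i : ℝ) + l * (∑ i, z i : ℝ))) *
          ∏ i, cexp ((m + l) * x i - (A i * Real.exp (x i) + B i * Real.exp (-x i) : ℝ))) ∧
      (∀ l m w, todaKernel n l y w * baxterKernel n m z w =
        cexp (l * (∑ i, y i : ℝ) + m * (∑ i, z i : ℝ)) *
          ∏ i : Fin n, cexp (-(m + l) * w i -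
            (A i.succ * Real.exp (w i) + B i.succ * Real.exp (-w i) : ℝ))) := by
  refine ⟨fun i => Real.exp (-y i) + if h : (i : ℕ) < n then Real.exp (-z ⟨i, h⟩) else 0,
    Fin.cons 0 fun i => Real.exp (y i.castSucc) + Real.exp (z i), ?_, rfl, ?_, ?_, ?_, ?_, ?_⟩
  · intro i
    dsimp only
    split_ifs <;> positivity
  · intro i
    rw [Fin.cons_succ]
    positivity
  · intro i
    simp only [Fin.cons_succ, Fin.val_castSucc, i.2, dite_true, Fin.eta]
    rw [← Real.log_exp (y i.castSucc + z i), ← Real.log_mul (by positivity) (by positivity)]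
    congr 1
    rw [mul_add, ← Real.exp_add, ← Real.exp_add, add_comm]
    congr 2 <;> ring
  · simp
  · intro l m x
    rw [baxterKernel, todaKernel, ← Complex.exp_sum, ← Complex.exp_add, ← Complex.exp_add]
    congr 1
    have key : (∑ i : Fin (n + 1), (Real.exp (x i - y i) + if h : (i : ℕ) + 1 < n + 1 then
        Real.exp (y i - x ⟨i + 1, h⟩) else 0)) +
        ∑ i : Fin n, (Real.exp (x i.castSucc - z i) + Real.exp (z i - x i.succ)) =
        ∑ i : Fin (n + 1), ((Real.exp (-y i) + if h : (i : ℕ) < n then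
            Real.exp (-z ⟨i, h⟩) else 0) * Real.exp (x i) +
          (Fin.cons 0 (fun i : Fin n => Real.exp (y i.castSucc) + Real.exp (z i)) :
            Fin (n + 1) → ℝ) i * Real.exp (-x i)) := by
      simp only [Finset.sum_add_distrib]
      rw [Fin.sum_univ_succ (fun i : Fin (n + 1) => (Fin.cons 0 _ : Fin (n + 1) → ℝ) i * _)]
      simp only [add_mul, Finset.sum_add_distrib]
      rw [Fin.sum_univ_castSucc (fun i : Fin (n + 1) => dite _ _ _ * _),
        Fin.sum_univ_castSucc (fun i : Fin (n + 1) => dite _ _ _)]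
      simp only [Fin.val_castSucc, Fin.is_lt, dite_true, Fin.val_last, lt_irrefl, dite_false,
        Fin.cons_zero, Fin.cons_succ, zero_mul, zero_add, add_zero, Fin.eta, add_lt_add_iff_right,
        sub_eq_add_neg, Real.exp_add, add_mul, Finset.sum_add_distrib, mul_comm (Real.exp (-_))]
      simp only [Fin.succ]
      ring
    rw [Finset.sum_sub_distrib, ← Finset.mul_sum, ← ofReal_sum, ← ofReal_sum, ← key]
    push_cast
    ring
  · intro l m w
    rw [baxterKernel, todaKernel, ← Complex.exp_sum, ← Complex.exp_add, ← Complex.exp_add]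
    congr 1
    have key : (∑ i : Fin n, (Real.exp (z i - w i) + if h : (i : ℕ) + 1 < n then
        Real.exp (w i - z ⟨i + 1, h⟩) else 0)) +
        ∑ i : Fin n, (Real.exp (y i.castSucc - w i) + Real.exp (w i - y i.succ)) =
        ∑ i : Fin n, ((Real.exp (-y i.succ) + if h : (i.succ : ℕ) < n then
            Real.exp (-z ⟨i.succ, h⟩) else 0) * Real.exp (w i) +
          (Fin.cons 0 (fun i : Fin n => Real.exp (y i.castSucc) + Real.exp (z i)) :
            Fin (n + 1) → ℝ) i.succ * Real.exp (-w i)) := by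
      rw [← Finset.sum_add_distrib]
      refine Finset.sum_congr rfl fun i _ => ?_
      simp only [Fin.cons_succ, Fin.val_succ]
      split_ifs <;> simp only [sub_eq_add_neg, Real.exp_add] <;> ring
    rw [Finset.sum_sub_distrib, ← Finset.mul_sum, ← ofReal_sum, ← ofReal_sum, ← key]
    push_cast
    ring

/-- The exchange relation between the Baxter operator and the recursion operator. -/
lemma integral_baxterKernel_mul_todaKernel (n : ℕ) {l m : ℂ} (h : 0 < (m + l).re)
    (y : Fin (n + 1) → ℝ) (z : Fin n → ℝ) :
    Integrable (fun x => baxterKernel (n + 1) m x y * todaKernel n l x z) ∧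
      ∫ x, baxterKernel (n + 1) m x y * todaKernel n l x z =
        Complex.Gamma (m + l) * ∫ w, todaKernel n l y w * baxterKernel n m z w := by
  obtain ⟨A, B, hA, hB0, hB, hlog, hlog', h1, h2⟩ :=
    exists_baxterKernel_mul_todaKernel_eq_prod n y z
  simp only [h1, h2]
  have hB' : ∀ i, 0 ≤ B i := fun i => Fin.cases hB0.ge (fun i => (hB i).le) i
  refine ⟨(Integrable.fintype_prod (f := fun i (t : ℝ) =>
    cexp ((m + l) * t - (A i * Real.exp t + B i * Real.exp (-t) : ℝ)))
    fun i => integrable_cexp_sub (hA i) (hB' i) (Or.inr h)).const_mul _, ?_⟩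
  rw [integral_const_mul, integral_const_mul,
    integral_fintype_prod_volume_eq_prod (fun i (t : ℝ) =>
      cexp ((m + l) * t - (A i * Real.exp t + B i * Real.exp (-t) : ℝ))),
    integral_fintype_prod_volume_eq_prod (fun (i : Fin n) (t : ℝ) =>
      cexp (-(m + l) * t - (A i.succ * Real.exp t + B i.succ * Real.exp (-t) : ℝ))),
    Fin.prod_univ_succ]
  simp only [integral_cexp_sub_symm (m + l) (hA _) (hB _), hB0, zero_mul, add_zero]
  rw [(integral_cexp_sub_mul_exp h (hA 0)).2, Finset.prod_mul_distrib, ← Complex.exp_sum]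
  have e : ∑ i : Fin n, (Real.log (B i.succ) - Real.log (A i.succ)) - Real.log (A 0) =
      ∑ i, y i + ∑ i, z i := by
    have e1 := Fin.sum_univ_succ fun i => Real.log (A i)
    have e2 := Fin.sum_univ_castSucc fun i => Real.log (A i)
    have e3 := Fin.sum_univ_castSucc y
    simp only [hlog, Finset.sum_sub_distrib, Finset.sum_add_distrib]
    linarith
  rw [← Finset.mul_sum, ← ofReal_sum]
  have e' : cexp (-(m * (∑ i, y i : ℝ) + l * (∑ i, z i : ℝ))) *
      (cexp (-((m + l) * Real.log (A 0))) *
        cexp ((m + l) * (∑ i : Fin n, (Real.log (B i.succ) - Real.log (A i.succ)) : ℝ))) =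
      cexp (l * (∑ i, y i : ℝ) + m * (∑ i, z i : ℝ)) := by
    rw [← Complex.exp_add, ← Complex.exp_add]
    congr 1
    rw [sub_eq_iff_eq_add.1 e]
    push_cast
    ring
  rw [← e']
  ring

lemma integral_norm_baxterKernel_mul_todaPsi_le {n : ℕ} {a : ℕ → ℂ} {m : ℂ} {y : Fin n → ℝ}
    {c : ℂ} (h : Integrable (fun x => baxterKernel n m.re x y * todaPsi n (fun j => (a j).re) x) ∧
      ∫ x, baxterKernel n m.re x y * todaPsi n (fun j => (a j).re) x = c) :
    ∫ x, ‖baxterKernel n m x y * todaPsi n a x‖ ≤ ‖c‖ := by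
  rw [← h.2]
  refine integral_norm_le_norm_integral h.1 (fun x => ?_) fun x => ?_
  · rw [norm_mul, norm_mul, norm_baxterKernel_re]
    gcongr
    exact norm_todaPsi_le_re n a x
  · rw [norm_mul, norm_baxterKernel_re, ofReal_mul, norm_baxterKernel, ofReal_norm_todaPsi_re]

/-- The Toda functions are eigenfunctions of the Baxter operator. -/
lemma integral_baxterKernel_mul_todaPsi (n : ℕ) (a : ℕ → ℂ) (m : ℂ)
    (h : ∀ j < n, 0 < (m + a j).re) (y : Fin n → ℝ) :
    Integrable (fun x => baxterKernel n m x y * todaPsi n a x) ∧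
      ∫ x, baxterKernel n m x y * todaPsi n a x =
        (∏ j ∈ Finset.range n, Complex.Gamma (m + a j)) * todaPsi n a y := by
  induction n generalizing a m with
  | zero =>
    have e : ∀ x, baxterKernel 0 m x y * todaPsi 0 a x = 1 := by simp [baxterKernel, todaPsi]
    simp only [e]
    simp [todaPsi, volume_pi, Measure.real, Measure.pi_empty_univ]
  | succ n ih =>
    have step : ∀ (a : ℕ → ℂ) (m : ℂ), (∀ j < n + 1, 0 < (m + a j).re) →
        Integrable (fun z => todaPsi n (fun j => a (j + 1)) z *
          ∫ w, baxterKernel n m z w * todaKernel n (a 0) y w) ∧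
        ∫ z, todaPsi n (fun j => a (j + 1)) z *
          ∫ w, baxterKernel n m z w * todaKernel n (a 0) y w =
        ∫ w, ((∏ j ∈ Finset.range n, Complex.Gamma (m + a (j + 1))) *
          todaPsi n (fun j => a (j + 1)) w) * todaKernel n (a 0) y w := by
      intro a m h
      have ih' := ih (fun j => ((a (j + 1)).re : ℂ)) m.re fun j hj => by
        simpa using h (j + 1) (by omega)
      refine integral_mul_integral_kernel (K := baxterKernel n m)
        (f := todaPsi n fun j => a (j + 1)) (g := todaKernel n (a 0) y)
        (continuous_baxterKernel n m).measurable (measurable_todaPsi n _)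
        (measurable_todaKernel_comp (a 0) measurable_const measurable_id)
        (fun w => ih (fun j => a (j + 1)) m (fun j hj => h (j + 1) (by omega)) w)
        (H := fun w => (∏ j ∈ Finset.range n, Complex.Gamma (m.re + (a (j + 1)).re)) *
          (todaKernel n (a 0) y w * todaPsi n (fun j => (a (j + 1)).re) w)) ?_ ?_
      · intro w
        refine (mul_le_mul_of_nonneg_right
          (integral_norm_baxterKernel_mul_todaPsi_le (ih' w)) (norm_nonneg _)).trans ?_
        rw [← norm_mul]
        exact le_of_eq (congrArg _ (by ring))
      · exact (integrable_todaKernel_mul_todaPsi _ _ _ _).const_mul _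
    have h0 := h 0 (by omega)
    have hre := step (fun j => (a j).re) m.re (by simpa using h)
    have key := integral_mul_integral_kernel (μ := volume) (ν := volume)
      (K := fun x z => baxterKernel (n + 1) m x y * todaKernel n (a 0) x z)
      (f := fun _ => 1) (g := todaPsi n fun j => a (j + 1))
      (h := fun z => Complex.Gamma (m + a 0) * ∫ w, todaKernel n (a 0) y w * baxterKernel n m z w)
      (H := fun z => Complex.Gamma (m.re + (a 0).re) * (todaPsi n (fun j => (a (j + 1)).re) z *
          ∫ w, baxterKernel n m.re z w * todaKernel n (a 0).re y w))
      ((measurable_baxterKernel_comp m measurable_fst measurable_const).mul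
        (measurable_todaKernel_comp (a 0) measurable_fst measurable_snd)) measurable_const
      (measurable_todaPsi n _) (fun z => by
        simpa only [mul_one] using integral_baxterKernel_mul_todaKernel n h0 y z) ?_
      (hre.1.const_mul _)
    · have e : ∀ x, baxterKernel (n + 1) m x y * todaPsi (n + 1) a x =
          1 * ∫ z, baxterKernel (n + 1) m x y * todaKernel n (a 0) x z *
            todaPsi n (fun j => a (j + 1)) z := by
        intro x
        simp only [mul_assoc]
        rw [integral_const_mul, one_mul, todaPsi]
      simp only [e]
      refine ⟨key.1, key.2.trans ?_⟩
      have e2 : ∀ z, (Complex.Gamma (m + a 0) *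
          ∫ w, todaKernel n (a 0) y w * baxterKernel n m z w) * todaPsi n (fun j => a (j + 1)) z =
          Complex.Gamma (m + a 0) * (todaPsi n (fun j => a (j + 1)) z *
          ∫ w, baxterKernel n m z w * todaKernel n (a 0) y w) := by
        intro z
        simp only [mul_comm (todaKernel n (a 0) y _)]
        ring
      simp only [e2]
      rw [integral_const_mul, (step a m h).2]
      simp only [mul_assoc]
      rw [integral_const_mul, Finset.prod_range_succ', todaPsi]
      simp only [mul_comm (todaPsi n _ _)]
      ring
    · intro z
      have hz := integral_baxterKernel_mul_todaKernel n (m := m.re) (l := (a 0).re)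
        (by simpa using h0) y z
      have : ∫ x, ‖baxterKernel (n + 1) m x y * todaKernel n (a 0) x z * 1‖ ≤
          ‖Complex.Gamma (m.re + (a 0).re) *
            ∫ w, todaKernel n (a 0).re y w * baxterKernel n m.re z w‖ := by
        rw [← hz.2]
        refine integral_norm_le_norm_integral hz.1 (fun x => ?_) fun x => ?_
        · rw [mul_one, norm_mul, norm_mul, norm_baxterKernel_re, norm_todaKernel_re]
        · rw [norm_mul, norm_baxterKernel_re, norm_todaKernel_re, ofReal_mul, norm_baxterKernel,
            norm_todaKernel]
      refine (mul_le_mul this (norm_todaPsi_le_re n _ z) (norm_nonneg _) (norm_nonneg _)).trans ?_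
      rw [← norm_mul]
      simp only [mul_comm (todaKernel n _ y _)]
      exact le_of_eq (congrArg _ (by ring))

lemma todaKernel_snoc (n : ℕ) (l : ℂ) (x y : Fin (n + 1) → ℝ) :
    todaKernel (n + 1) l (Fin.snoc (α := fun _ => ℝ) x 0) y =
      baxterKernel (n + 1) l x y * cexp (-(Real.exp (y (Fin.last n)) : ℝ)) := by
  rw [todaKernel, baxterKernel, ← Complex.exp_add]
  congr 1
  have e : ∑ i : Fin (n + 1), (Real.exp (Fin.snoc (α := fun _ => ℝ) x 0 i.castSucc - y i) +
      Real.exp (y i - Fin.snoc (α := fun _ => ℝ) x 0 i.succ)) =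
      ∑ i : Fin (n + 1), (Real.exp (x i - y i) +
        if h : (i : ℕ) + 1 < n + 1 then Real.exp (y i - x ⟨i + 1, h⟩) else 0) +
      Real.exp (y (Fin.last n)) := by
    simp only [Fin.snoc_castSucc, Finset.sum_add_distrib]
    rw [Fin.sum_univ_castSucc (fun i : Fin (n + 1) => Real.exp (y i - _)),
      Fin.sum_univ_castSucc (fun i : Fin (n + 1) => dite _ _ _)]
    simp [← Fin.castSucc_succ, Fin.succ_last, Fin.snoc_castSucc]
    simp [Fin.succ]
    ring
  rw [e, Fin.sum_univ_castSucc (fun i : Fin (n + 2) => _)]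
  simp only [Fin.snoc_castSucc, Fin.snoc_last]
  push_cast
  ring

lemma todaKernel_mul_exp_eq_baxterKernel_snoc (n : ℕ) (l : ℂ) (y : Fin (n + 1) → ℝ)
    (z : Fin n → ℝ) :
    todaKernel n l y z * cexp (-(Real.exp (y (Fin.last n)) : ℝ)) =
      baxterKernel (n + 1) l y (Fin.snoc (α := fun _ => ℝ) z 0) := by
  rw [todaKernel, baxterKernel, ← Complex.exp_add]
  congr 1
  have e : ∑ i : Fin (n + 1), (Real.exp (y i - Fin.snoc (α := fun _ => ℝ) z 0 i) +
        if h : (i : ℕ) + 1 < n + 1 then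
          Real.exp (Fin.snoc (α := fun _ => ℝ) z 0 i - y ⟨i + 1, h⟩) else 0) =
      ∑ i : Fin n, (Real.exp (y i.castSucc - z i) + Real.exp (z i - y i.succ)) +
      Real.exp (y (Fin.last n)) := by
    rw [Fin.sum_univ_castSucc]
    simp [Fin.succ]
  rw [e, Fin.sum_univ_castSucc (Fin.snoc (α := fun _ => ℝ) z 0)]
  simp only [Fin.snoc_castSucc, Fin.snoc_last]
  push_cast
  ring

lemma measurable_snoc_zero (n : ℕ) :
    Measurable fun x : Fin n → ℝ => (Fin.snoc (α := fun _ => ℝ) x 0 : Fin (n + 1) → ℝ) := by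
  refine measurable_pi_lambda _ fun i => ?_
  refine Fin.lastCases ?_ (fun i => ?_) i
  · simp
  · simpa using measurable_pi_apply i

/-- The `GL_n × GL_n` integral, assuming the `GL_n × GL_{n-1}` integral. -/
lemma integral_todaPsi_mul_todaPsi_mul_exp {n : ℕ}
    (ih : ∀ a b : ℕ → ℂ, (∀ j < n + 1, ∀ k < n, 0 < (a j + b k).re) →
      Integrable (fun x : Fin n → ℝ =>
        todaPsi (n + 1) a (Fin.snoc (α := fun _ => ℝ) x 0) * todaPsi n b x) ∧
      ∫ x : Fin n → ℝ, todaPsi (n + 1) a (Fin.snoc (α := fun _ => ℝ) x 0) * todaPsi n b x =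
        ∏ j ∈ Finset.range (n + 1), ∏ k ∈ Finset.range n, Complex.Gamma (a j + b k))
    (a b : ℕ → ℂ) (h : ∀ j < n + 1, ∀ k < n + 1, 0 < (a j + b k).re) :
    Integrable (fun y : Fin (n + 1) → ℝ => todaPsi (n + 1) b y *
        (todaPsi (n + 1) a y * cexp (-(Real.exp (y (Fin.last n)) : ℝ)))) ∧
      ∫ y : Fin (n + 1) → ℝ, todaPsi (n + 1) b y *
        (todaPsi (n + 1) a y * cexp (-(Real.exp (y (Fin.last n)) : ℝ))) =
        ∏ j ∈ Finset.range (n + 1), ∏ k ∈ Finset.range (n + 1), Complex.Gamma (a j + b k) := by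
  have e : ∀ y : Fin (n + 1) → ℝ,
      todaPsi (n + 1) a y * cexp (-(Real.exp (y (Fin.last n)) : ℝ)) =
      ∫ z, baxterKernel (n + 1) (a 0) y (Fin.snoc (α := fun _ => ℝ) z 0) *
        todaPsi n (fun j => a (j + 1)) z := by
    intro y
    rw [todaPsi, ← integral_mul_const]
    congr 1; ext z
    rw [← todaKernel_mul_exp_eq_baxterKernel_snoc]
    ring
  simp only [e]
  have hI := ih b (fun j => a (j + 1)) fun j hj k hk => by
    simpa [add_comm] using h (k + 1) (by omega) j hj
  have hIre := ih (fun j => ((b j).re : ℂ)) (fun j => ((a (j + 1)).re : ℂ)) fun j hj k hk => by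
    simpa [add_comm] using h (k + 1) (by omega) j hj
  have key := integral_mul_integral_kernel (μ := volume) (ν := volume)
    (K := fun y z => baxterKernel (n + 1) (a 0) y (Fin.snoc (α := fun _ => ℝ) z 0))
    (f := todaPsi (n + 1) b) (g := todaPsi n fun j => a (j + 1))
    (h := fun z => (∏ k ∈ Finset.range (n + 1), Complex.Gamma (a 0 + b k)) *
      todaPsi (n + 1) b (Fin.snoc (α := fun _ => ℝ) z 0))
    (H := fun z => (∏ k ∈ Finset.range (n + 1), Complex.Gamma ((a 0).re + (b k).re)) *
      (todaPsi (n + 1) (fun k => (b k).re) (Fin.snoc (α := fun _ => ℝ) z 0) *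
        todaPsi n (fun j => (a (j + 1)).re) z))
    (measurable_baxterKernel_comp (a 0) measurable_fst
      ((measurable_snoc_zero n).comp measurable_snd))
    (measurable_todaPsi _ _) (measurable_todaPsi _ _)
    (fun z => integral_baxterKernel_mul_todaPsi (n + 1) b (a 0) (h 0 (by omega)) _) ?_
    (hIre.1.const_mul _)
  · refine ⟨key.1, key.2.trans ?_⟩
    simp only [mul_assoc]
    rw [integral_const_mul, hI.2, Finset.prod_comm, Finset.prod_range_succ' (fun j => ∏ k ∈ _, _),
      mul_comm]
    simp only [add_comm (b _)]
  · intro z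
    have := integral_norm_baxterKernel_mul_todaPsi_le
      (integral_baxterKernel_mul_todaPsi (n + 1) (fun k => ((b k).re : ℂ)) (a 0).re
        (by simpa using h 0 (by omega)) (Fin.snoc (α := fun _ => ℝ) z 0))
    refine (mul_le_mul this (norm_todaPsi_le_re n _ z) (norm_nonneg _) (norm_nonneg _)).trans ?_
    rw [← norm_mul, mul_assoc]

/-- The `GL_{n+1} × GL_n` integral of Toda functions. -/
lemma integral_todaPsi_snoc_mul_todaPsi (n : ℕ) (a b : ℕ → ℂ)
    (h : ∀ j < n + 1, ∀ k < n, 0 < (a j + b k).re) :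
    Integrable (fun x : Fin n → ℝ =>
        todaPsi (n + 1) a (Fin.snoc (α := fun _ => ℝ) x 0) * todaPsi n b x) ∧
      ∫ x : Fin n → ℝ, todaPsi (n + 1) a (Fin.snoc (α := fun _ => ℝ) x 0) * todaPsi n b x =
        ∏ j ∈ Finset.range (n + 1), ∏ k ∈ Finset.range n, Complex.Gamma (a j + b k) := by
  induction n generalizing a b with
  | zero =>
    have e : ∀ x : Fin 1 → ℝ, x = 0 → todaPsi 1 a x = 1 := by
      intro x hx
      simp [todaPsi, todaKernel, hx, volume_pi, Measure.real, Measure.pi_empty_univ]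
    have e' : ∀ x : Fin 0 → ℝ,
        todaPsi (0 + 1) a (Fin.snoc (α := fun _ => ℝ) x 0) * todaPsi 0 b x = 1 := by
      intro x
      rw [todaPsi.eq_1, mul_one]
      refine e _ (funext fun i => ?_)
      rw [show i = Fin.last 0 from Subsingleton.elim (α := Fin 1) _ _,
        Fin.snoc_last]
      rfl
    simp only [e']
    simp [volume_pi, Measure.real, Measure.pi_empty_univ]
  | succ n ih =>
    have hJ := integral_todaPsi_mul_todaPsi_mul_exp ih b (fun j => a (j + 1))
      fun j hj k hk => by simpa [add_comm] using h (k + 1) (by omega) j hj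
    have hJre := integral_todaPsi_mul_todaPsi_mul_exp ih (fun j => ((b j).re : ℂ))
      (fun j => ((a (j + 1)).re : ℂ))
      fun j hj k hk => by simpa [add_comm] using h (k + 1) (by omega) j hj
    have key := integral_mul_integral_kernel (μ := volume) (ν := volume)
      (K := baxterKernel (n + 1) (a 0)) (f := todaPsi (n + 1) b)
      (g := fun y => cexp (-(Real.exp (y (Fin.last n)) : ℝ)) * todaPsi (n + 1) (fun j => a (j + 1)) y)
      (h := fun y => (∏ k ∈ Finset.range (n + 1), Complex.Gamma (a 0 + b k)) *
        todaPsi (n + 1) b y)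
      (H := fun y => (∏ k ∈ Finset.range (n + 1), Complex.Gamma ((a 0).re + (b k).re)) *
        (todaPsi (n + 1) (fun j => (a (j + 1)).re) y *
          (todaPsi (n + 1) (fun k => (b k).re) y * cexp (-(Real.exp (y (Fin.last n)) : ℝ)))))
      (continuous_baxterKernel (n + 1) (a 0)).measurable
      (measurable_todaPsi _ _)
      (Measurable.mul (Continuous.measurable (by fun_prop)) (measurable_todaPsi _ _))
      (fun z => integral_baxterKernel_mul_todaPsi (n + 1) b (a 0) (h 0 (by omega)) _) ?_
      (hJre.1.const_mul _)
    · have e : ∀ x : Fin (n + 1) → ℝ, todaPsi (n + 1 + 1) a (Fin.snoc (α := fun _ => ℝ) x 0) *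
          todaPsi (n + 1) b x = todaPsi (n + 1) b x * ∫ y, baxterKernel (n + 1) (a 0) x y *
            (cexp (-(Real.exp (y (Fin.last n)) : ℝ)) * todaPsi (n + 1) (fun j => a (j + 1)) y) := by
        intro x
        rw [todaPsi, mul_comm]
        simp only [todaKernel_snoc, mul_assoc]
      simp only [e]
      refine ⟨key.1, key.2.trans ?_⟩
      have e2 : ∀ y, (∏ k ∈ Finset.range (n + 1), Complex.Gamma (a 0 + b k)) *
          todaPsi (n + 1) b y * (cexp (-(Real.exp (y (Fin.last n)) : ℝ)) *
            todaPsi (n + 1) (fun j => a (j + 1)) y) =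
          (∏ k ∈ Finset.range (n + 1), Complex.Gamma (a 0 + b k)) *
          (todaPsi (n + 1) (fun j => a (j + 1)) y *
          (todaPsi (n + 1) b y * cexp (-(Real.exp (y (Fin.last n)) : ℝ)))) := fun y => by ring
      simp only [e2]
      rw [integral_const_mul, hJ.2, Finset.prod_comm,
        Finset.prod_range_succ' (fun j => ∏ k ∈ Finset.range (n + 1), Complex.Gamma (a j + b k))
          (n + 1),
        mul_comm]
      simp only [add_comm (b _)]
    · intro y
      have := integral_norm_baxterKernel_mul_todaPsi_le
        (integral_baxterKernel_mul_todaPsi (n + 1) (fun k => ((b k).re : ℂ)) (a 0).re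
          (by simpa using h 0 (by omega)) y)
      rw [norm_mul (cexp _)]
      refine (mul_le_mul this (mul_le_mul_of_nonneg_left (norm_todaPsi_le_re (n + 1) _ y)
        (norm_nonneg _)) (by positivity) (norm_nonneg _)).trans ?_
      rw [← norm_mul, ← norm_mul]
      exact le_of_eq (congrArg _ (by ring))

lemma todaPsi_add_const (n : ℕ) (a : ℕ → ℂ) (c : ℂ) (x : Fin n → ℝ) :
    todaPsi n (fun j => a j + c) x = cexp (c * (∑ i, x i : ℝ)) * todaPsi n a x := by
  induction n generalizing a with
  | zero => simp [todaPsi]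
  | succ n ih =>
    rw [todaPsi, todaPsi, ← integral_const_mul]
    congr 1; ext z
    rw [ih fun j => a (j + 1), ← mul_assoc, ← mul_assoc, todaKernel, todaKernel,
      ← Complex.exp_add, ← Complex.exp_add]
    congr 2
    push_cast
    ring

lemma todaPsi_add_diag (n : ℕ) (a : ℕ → ℂ) (x : Fin n → ℝ) (t : ℝ) :
    todaPsi n a (fun i => x i + t) = cexp (t * ∑ j ∈ Finset.range n, a j) * todaPsi n a x := by
  induction n generalizing a with
  | zero => simp [todaPsi]
  | succ n ih =>
    rw [todaPsi, todaPsi, ← integral_const_mul,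
      ← integral_add_right_eq_self _ (fun _ : Fin n => t)]
    congr 1; ext z
    have := ih (fun j => a (j + 1)) z
    simp only [Pi.add_def, this]
    rw [← mul_assoc, ← mul_assoc, todaKernel, todaKernel, ← Complex.exp_add, ← Complex.exp_add,
      Finset.sum_range_succ']
    simp only [add_sub_add_right_eq_sub, Finset.sum_add_distrib, Finset.sum_const,
      Finset.card_univ, Fintype.card_fin, nsmul_eq_mul]
    congr 2
    push_cast
    ring

lemma extR_val {k : ℕ} (t : Fin k → ℝ) (i : Fin k) : extR t i = t i := by simp [extR]

lemma extR_of_lt {k : ℕ} (t : Fin k → ℝ) {i : ℕ} (h : i < k) : extR t i = t ⟨i, h⟩ := by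
  simp [extR, h]

lemma setIntegral_posSet (k : ℕ) (f : (Fin k → ℝ) → ℂ) :
    ∫ t in posSet k, f t * (∏ j ∈ Finset.range k, ((extR t j : ℝ) : ℂ))⁻¹ =
      ∫ u : Fin k → ℝ, f fun i => Real.exp (u i) := by
  have himg : (fun (u : Fin k → ℝ) i => Real.exp (u i)) '' Set.univ = posSet k := by
    ext t
    simp only [Set.image_univ, Set.mem_range, posSet, Set.mem_ofPred_eq]
    constructor
    · rintro ⟨u, rfl⟩ j
      exact Real.exp_pos _
    · intro h
      exact ⟨fun i => Real.log (t i), funext fun i => Real.exp_log (h i)⟩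
  let D : (Fin k → ℝ) → (Fin k → ℝ) →L[ℝ] (Fin k → ℝ) := fun u =>
    ContinuousLinearMap.pi fun i => Real.exp (u i) • ContinuousLinearMap.proj i
  have hD : ∀ u ∈ (Set.univ : Set (Fin k → ℝ)), HasFDerivWithinAt
      (fun (u : Fin k → ℝ) i => Real.exp (u i)) (D u) Set.univ u := by
    intro u _
    refine HasFDerivAt.hasFDerivWithinAt (hasFDerivAt_pi.2 fun i => ?_)
    exact (ContinuousLinearMap.proj (R := ℝ) (φ := fun _ : Fin k => ℝ) i).hasFDerivAt.exp
  have hdet : ∀ u, |(D u).det| = ∏ i, Real.exp (u i) := by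
    intro u
    have : (D u : (Fin k → ℝ) →ₗ[ℝ] (Fin k → ℝ)) =
        Matrix.toLin' (Matrix.diagonal fun i => Real.exp (u i)) := by
      ext v i
      simp [D, Matrix.mulVec_diagonal]
    rw [ContinuousLinearMap.det, this, LinearMap.det_toLin', Matrix.det_diagonal,
      abs_of_pos (Finset.prod_pos fun _ _ => Real.exp_pos _)]
  have hinj : Set.InjOn (fun (u : Fin k → ℝ) i => Real.exp (u i)) Set.univ := fun u _ v _ h =>
    funext fun i => Real.exp_injective (congrFun h i)
  rw [← himg, integral_image_eq_integral_abs_det_fderiv_smul volume MeasurableSet.univ hD hinj,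
    setIntegral_univ]
  congr 1; ext u
  rw [hdet, Finset.prod_range]
  simp only [extR_val, ← ofReal_prod, real_smul]
  have : ((∏ i, Real.exp (u i) : ℝ) : ℂ) ≠ 0 := by
    exact_mod_cast (Finset.prod_pos fun _ _ => Real.exp_pos _).ne'
  field_simp

/-- The logarithmic coordinates `log ∏_{i ≤ j < n} (π y_j)²`. -/
def logCoord (n : ℕ) (y : ℕ → ℝ) (i : ℕ) : ℝ :=
  ∑ j ∈ Finset.Ico i n, 2 * Real.log (Real.pi * y j)

lemma sum_range_sum_Ico (N : ℕ) (f : ℕ → ℝ) :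
    ∑ i ∈ Finset.range (N + 1), ∑ j ∈ Finset.Ico i N, f j =
      ∑ j ∈ Finset.range N, ((j : ℝ) + 1) * f j := by
  induction N with
  | zero => simp
  | succ N ih =>
    rw [Finset.sum_range_succ, Finset.Ico_self, Finset.sum_empty, add_zero,
      Finset.sum_range_succ (fun j : ℕ => ((j : ℝ) + 1) * f j), ← ih]
    have : ∀ i ∈ Finset.range (N + 1), ∑ j ∈ Finset.Ico i (N + 1), f j =
        ∑ j ∈ Finset.Ico i N, f j + f N := fun i hi =>
      Finset.sum_Ico_succ_top (by simpa [Nat.lt_succ_iff] using hi) _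
    rw [Finset.sum_congr rfl this, Finset.sum_add_distrib]
    simp

lemma logCoord_zero (n : ℕ) (y : ℕ → ℝ) :
    logCoord n y 0 = ∑ j ∈ Finset.range n, 2 * Real.log (Real.pi * y j) := by
  rw [logCoord, Finset.range_eq_Ico]

lemma logCoord_self (n : ℕ) (y : ℕ → ℝ) : logCoord n y n = 0 := by simp [logCoord]

lemma logCoord_eq_add {n i : ℕ} (y : ℕ → ℝ) (h : i < n) :
    logCoord n y i = 2 * Real.log (Real.pi * y i) + logCoord n y (i + 1) :=
  Finset.sum_eq_sum_Ico_succ_bot h _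

lemma sum_logCoord (n : ℕ) (y : ℕ → ℝ) :
    2 * ∑ j ∈ Finset.range n, ((n - j : ℕ) : ℝ) * Real.log (Real.pi * y j) =
      (n + 1) * logCoord n y 0 - ∑ i ∈ Finset.range (n + 1), logCoord n y i := by
  simp only [logCoord_zero]
  simp only [logCoord]
  rw [sum_range_sum_Ico, Finset.mul_sum, Finset.mul_sum, ← Finset.sum_sub_distrib]
  refine Finset.sum_congr rfl fun j hj => ?_
  rw [Nat.cast_sub (Finset.mem_range.1 hj).le]
  ring

lemma ofReal_cpow_eq_cexp {x : ℝ} (hx : 0 < x) (w : ℂ) : (x : ℂ) ^ w = cexp (Real.log x * w) := by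
  rw [cpow_def_of_ne_zero (by exact_mod_cast hx.ne'), ofReal_log hx.le]

lemma sumA_tildeA (n : ℕ) (a : ℕ → ℂ) : sumA (n + 2) (tildeA (n + 3) a) = sumA (n + 3) a := by
  have h : (n : ℂ) + 2 ≠ 0 := by exact_mod_cast (by omega : n + 2 ≠ 0)
  rw [sumA, sumA, Finset.sum_range_succ' (n := n + 2)]
  simp only [tildeA, Finset.sum_add_distrib, Finset.sum_const, Finset.card_range, nsmul_eq_mul]
  have e : ((n + 3 : ℕ) : ℂ) - 1 = n + 2 := by push_cast; ring
  rw [e]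
  push_cast
  field_simp

lemma logCoord_mul_sqrt {n i : ℕ} (y t : ℕ → ℝ) (hy : ∀ j < n + 2, 0 < y j)
    (ht : ∀ j < n + 2, 0 < t j) (hi : i ≤ n + 1) :
    logCoord (n + 1) (fun j => y (j + 1) * Real.sqrt (t (j + 1) / t j)) i =
      logCoord (n + 2) y (i + 1) + Real.log (t (n + 1)) - Real.log (t i) := by
  have e : ∀ j ∈ Finset.Ico i (n + 1),
      2 * Real.log (Real.pi * (y (j + 1) * Real.sqrt (t (j + 1) / t j))) =
      2 * Real.log (Real.pi * y (j + 1)) + (Real.log (t (j + 1)) - Real.log (t j)) := by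
    intro j hj
    have hj' := (Finset.mem_Ico.1 hj).2
    have h1 := hy (j + 1) (by omega)
    have h2 := ht (j + 1) (by omega)
    have h3 := ht j (by omega)
    rw [← mul_assoc, Real.log_mul (by positivity) (by positivity), Real.log_sqrt (by positivity),
      Real.log_div h2.ne' h3.ne']
    ring
  rw [logCoord, Finset.sum_congr rfl e, Finset.sum_add_distrib, logCoord,
    Finset.sum_Ico_add' (fun j => 2 * Real.log (Real.pi * y j)) i (n + 1) 1,
    Finset.sum_Ico_sub (fun j => Real.log (t j)) hi]
  ring

lemma todaPsi_one (a : ℕ → ℂ) (x : Fin 1 → ℝ) : todaPsi 1 a x = cexp (a 0 * x 0) := by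
  rw [todaPsi, volume_pi, Measure.pi_of_empty (x := 0), integral_dirac]
  simp [todaKernel, todaPsi]

lemma integral_fin_one (f : (Fin 1 → ℝ) → ℂ) : ∫ z, f z = ∫ v : ℝ, f fun _ => v :=
  ((volume_preserving_funUnique (Fin 1) ℝ).symm.integral_comp
    (MeasurableEquiv.measurableEmbedding _) f).symm

lemma whittAr_two (a : ℕ → ℂ) (y : ℕ → ℝ) (hy : 0 < y 0) :
    WhittAr 2 a y = cexp (-Real.log Real.pi * (1 / 2) * sumA 2 a) *
      todaPsi 2 (fun j => a j / 2) fun i : Fin 2 => logCoord 1 y i := by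
  have hL : Real.exp (Real.log (Real.pi * y 0)) = Real.pi * y 0 := Real.exp_log (by positivity)
  have hlog : Real.log (Real.pi * y 0) = Real.log Real.pi + Real.log (y 0) :=
    Real.log_mul Real.pi_ne_zero hy.ne'
  rw [WhittAr, BesselK, (integral_exp_image _).2, todaPsi,
    integral_fin_one, ← integral_sub_left_eq_self _ volume (Real.log (Real.pi * y 0)), ← mul_assoc,
    ← integral_const_mul, ← integral_const_mul]
  congr 1; ext u
  obtain ⟨v, rfl⟩ : ∃ v, u = Real.log (Real.pi * y 0) - v := ⟨_, (sub_sub_cancel _ _).symm⟩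
  simp only [sub_sub_cancel]
  rw [todaPsi_one, todaKernel, ofReal_cpow_eq_cexp hy, ofReal_cpow_eq_cexp (Real.exp_pos v),
    Real.log_exp, real_smul]
  have e0 : (Real.exp v : ℂ) ≠ 0 := by exact_mod_cast (Real.exp_pos v).ne'
  have l0 : logCoord 1 y 0 = 2 * Real.log (Real.pi * y 0) := by simp [logCoord]
  have l1 : logCoord 1 y 1 = 0 := logCoord_self 1 y
  have e1 : ∀ A B : ℂ, 2 * cexp A * (1 / 2) * (Real.exp v * (cexp B * cexp (v * ((a 0 - a 1) / 2)) /
      Real.exp v)) = cexp (A + (B + v * ((a 0 - a 1) / 2))) := by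
    intro A B
    rw [Complex.exp_add, Complex.exp_add]
    field_simp
  rw [e1, ← Complex.exp_add, ← Complex.exp_add]
  congr 1
  have e2 : Real.exp (2 * Real.log (Real.pi * y 0) - (Real.log (Real.pi * y 0) - v)) =
      Real.pi * y 0 * Real.exp v := by
    rw [← hL, ← Real.exp_add, hL]; ring_nf
  have e3 : Real.exp (Real.log (Real.pi * y 0) - v - 0) =
      Real.pi * y 0 * (1 / Real.exp v) := by
    rw [sub_zero, Real.exp_sub, hL]; ring
  have e4 : ∑ i : Fin (1 + 1), logCoord 1 y i = logCoord 1 y 0 + logCoord 1 y 1 :=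
    Fin.sum_univ_two _
  simp only [sumA, Finset.sum_range_succ, Finset.sum_range_zero, e4,
    Fin.sum_univ_one, zero_add, Fin.castSucc_zero, Fin.succ_zero_eq_one, Fin.val_zero, Fin.val_one,
    l0, l1, e2, e3]
  simp only [hlog]
  push_cast
  ring

lemma whittAr_eq_todaPsi (n : ℕ) (a : ℕ → ℂ) (y : ℕ → ℝ) (hy : ∀ j < n + 1, 0 < y j) :
    WhittAr (n + 2) a y = cexp (-Real.log Real.pi * ((n + 1) / 2) * sumA (n + 2) a) *
      todaPsi (n + 2) (fun j => a j / 2) fun i : Fin (n + 2) => logCoord (n + 1) y i := by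
  induction n generalizing a y with
  | zero => simpa using whittAr_two a y (hy 0 one_pos)
  | succ n ih =>
    have hN : (n : ℂ) + 2 ≠ 0 := by exact_mod_cast (by omega : n + 2 ≠ 0)
    have key := sum_logCoord (n + 2) y
    rw [WhittAr, setIntegral_posSet, todaPsi, ← integral_const_mul,
      ← integral_sub_left_eq_self _ volume (fun i : Fin (n + 2) => logCoord (n + 2) y (i + 1))]
    congr 1; ext z
    have hu : ∀ j (h : j < n + 2), extR (fun i : Fin (n + 2) =>
        Real.exp (((fun i : Fin (n + 2) => logCoord (n + 2) y (i + 1)) - z) i)) j =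
        Real.exp (logCoord (n + 2) y (j + 1) - z ⟨j, h⟩) := fun j h => by
      simp [extR_of_lt _ h]
    set T := extR (fun i : Fin (n + 2) =>
        Real.exp (((fun i : Fin (n + 2) => logCoord (n + 2) y (i + 1)) - z) i)) with hT
    have hTpos : ∀ j < n + 2, 0 < T j := fun j h => by rw [hu j h]; exact Real.exp_pos _
    have hlast : Real.log (T (n + 1)) = - z ⟨n + 1, by omega⟩ := by
      rw [hu _ (by omega), Real.log_exp, logCoord_self, zero_sub]
    have harg : (fun i : Fin (n + 2) => logCoord (n + 1)
        (fun j => y (j + 1) * Real.sqrt (T (j + 1) / T j)) i) =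
        fun i => z i + -z ⟨n + 1, by omega⟩ := by
      funext i
      rw [logCoord_mul_sqrt y T hy hTpos (by omega), hlast, hu i i.2, Real.log_exp]
      ring
    have hpar : (fun j => tildeA (n + 3) a j / 2) =
        fun j => a (j + 1) / 2 + a 0 / (2 * (n + 2)) := by
      funext j
      have e : ((n + 3 : ℕ) : ℂ) - 1 = n + 2 := by push_cast; ring
      rw [tildeA, e]
      field_simp
    have hsum : ∑ j ∈ Finset.range (n + 2), (a (j + 1) / 2 + a 0 / (2 * (n + 2))) =
        sumA (n + 3) a / 2 := by
      rw [← sumA_tildeA, sumA, Finset.sum_div]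
      exact Finset.sum_congr rfl fun j _ => (congrFun hpar j).symm
    rw [ih (tildeA (n + 3) a) _ fun j hj => mul_pos (hy _ (by omega)) (Real.sqrt_pos.2
      (div_pos (hTpos _ (by omega)) (hTpos _ (by omega)))), harg, hpar, todaPsi_add_diag, hsum,
      todaPsi_add_const, sumA_tildeA, todaKernel]
    have hprod : ∏ j ∈ Finset.range (n + 2),
            Complex.exp (((-(Real.pi * y j) ^ 2 * T j - 1 / T j : ℝ) : ℂ)) *
              ((Real.pi * y j : ℝ) : ℂ) ^ ((((n + 2 - j : ℕ) : ℂ) * a 0) / ((n + 2 : ℕ) : ℂ)) *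
              ((T j : ℝ) : ℂ) ^ ((((n + 3 : ℕ) : ℂ) * a 0) / (2 * ((n + 2 : ℕ) : ℂ))) =
        cexp (-((∑ i : Fin (n + 2), (Real.exp (logCoord (n + 2) y i - z i) +
            Real.exp (z i - logCoord (n + 2) y (i + 1))) : ℝ) : ℂ) +
          ((∑ j ∈ Finset.range (n + 2), ((n + 2 - j : ℕ) : ℝ) * Real.log (Real.pi * y j) : ℝ) : ℂ) *
            (a 0 / (n + 2)) +
          ((∑ i : Fin (n + 2), (logCoord (n + 2) y (i + 1) - z i) : ℝ) : ℂ) *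
            ((n + 3) * a 0 / (2 * (n + 2)))) := by
      rw [Finset.prod_range, Finset.sum_range]
      push_cast
      rw [Finset.sum_mul, Finset.sum_mul, ← Finset.sum_neg_distrib, ← Finset.sum_add_distrib,
        ← Finset.sum_add_distrib, Complex.exp_sum]
      refine Finset.prod_congr rfl fun j _ => ?_
      have hpy : 0 < Real.pi * y j := mul_pos Real.pi_pos (hy j j.2)
      have h1 : (Real.pi * y j) ^ 2 * T j = Real.exp (logCoord (n + 2) y j - z j) := by
        rw [hu j j.2, logCoord_eq_add y j.2, add_sub_assoc, Real.exp_add, two_mul, Real.exp_add,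
          Real.exp_log hpy]
        ring
      have h2 : 1 / T j = Real.exp (z j - logCoord (n + 2) y (j + 1)) := by
        rw [hu j j.2, one_div, ← Real.exp_neg, neg_sub]
      rw [← ofReal_mul, ofReal_cpow_eq_cexp hpy, ofReal_cpow_eq_cexp (hTpos j j.2), hu j j.2,
        Real.log_exp, ← hu j j.2, ← Complex.exp_add, ← Complex.exp_add]
      congr 1
      have h1' := congrArg (fun r : ℝ => (r : ℂ)) h1
      have h2' := congrArg (fun r : ℝ => (r : ℂ)) h2
      push_cast at h1' h2' ⊢
      rw [← h1', ← h2']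
      field_simp
      ring
    have hTl : 0 < T (n + 1) := hTpos _ (by omega)
    have hpi : Real.log (Real.pi * T (n + 1)) = Real.log Real.pi - z ⟨n + 1, by omega⟩ := by
      rw [Real.log_mul Real.pi_ne_zero hTl.ne', hlast]; ring
    rw [hprod, ofReal_cpow_eq_cexp (mul_pos Real.pi_pos hTl), hpi]
    have hX : ∑ i : Fin (n + 2), logCoord (n + 2) y (i + 1) =
        ∑ i : Fin (n + 3), logCoord (n + 2) y i - logCoord (n + 2) y 0 := by
      rw [Fin.sum_univ_succ (n := n + 2)]
      simp
    rw [← Fin.sum_univ_eq_sum_range (fun i => logCoord (n + 2) y i)] at key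
    have key' : ∑ j ∈ Finset.range (n + 2), ((n + 2 - j : ℕ) : ℝ) * Real.log (Real.pi * y j) =
        ((n + 3) * logCoord (n + 2) y 0 - ∑ i : Fin (n + 3), logCoord (n + 2) y i) / 2 := by
      push_cast at key
      linear_combination key / 2
    rw [key', Finset.sum_sub_distrib, hX]
    generalize todaPsi _ _ _ = P
    have e : ∀ A B C D E F G : ℂ, A + B + C + D + E = F + G →
      cexp A * (cexp B * (cexp C * P)) * cexp D * cexp E = cexp F * (cexp G * P) := by
      intro A B C D E F G h
      have := congrArg cexp h
      simp only [Complex.exp_add] at this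
      linear_combination P * this
    refine e _ _ _ _ _ _ _ ?_
    change _ = -(Real.log Real.pi : ℂ) * (((n + 1 : ℕ) + 1) / 2) * sumA (n + 3) a +
      (a 0 / 2 * ((∑ i : Fin (n + 3), logCoord (n + 2) y i - ∑ i, z i : ℝ) : ℂ) -
        ((∑ i : Fin (n + 2), (Real.exp (logCoord (n + 2) y i - z i) +
            Real.exp (z i - logCoord (n + 2) y (i + 1))) : ℝ) : ℂ))
    generalize (∑ i : Fin (n + 2), (Real.exp (logCoord (n + 2) y i - z i) +
            Real.exp (z i - logCoord (n + 2) y (i + 1)))) = S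
    generalize ∑ i : Fin (n + 3), logCoord (n + 2) y i = R
    generalize ∑ i : Fin (n + 2), z i = Z
    push_cast
    field_simp
    ring

lemma whittAr_succ_eq_todaPsi (n : ℕ) (a : ℕ → ℂ) (y : ℕ → ℝ) (hy : ∀ j < n, 0 < y j) :
    WhittAr (n + 1) a y = cexp (-Real.log Real.pi * (n / 2) * sumA (n + 1) a) *
      todaPsi (n + 1) (fun j => a j / 2) fun i : Fin (n + 1) => logCoord n y i := by
  cases n with
  | zero =>
    have h : ∀ i, logCoord 0 y i = 0 := fun i => by simp [logCoord]
    simp [WhittAr, todaPsi_one, h]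
  | succ n =>
    rw [whittAr_eq_todaPsi n a y hy]
    push_cast
    rfl

lemma whittAhat_mul_whittAhat (n : ℕ) (a b : ℕ → ℂ) (s : ℂ) (y : ℕ → ℝ)
    (hy : ∀ j < n + 1, 0 < y j) (hy1 : y (n + 1) = 1) :
    WhittAhat (n + 2) a y * WhittAhat (n + 1) b y *
        ∏ j ∈ Finset.range (n + 1), (y j : ℂ) ^ (((j + 1 : ℕ) : ℂ) * s) =
      cexp (-Real.log Real.pi * (((n + 1) * sumA (n + 2) a + (n + 2) * sumA (n + 1) b +
        (n + 1) * (n + 2) * s) / 2)) *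
      (todaPsi (n + 2) (fun j => a j / 2)
        (Fin.snoc (α := fun _ => ℝ) (fun i : Fin (n + 1) => logCoord (n + 1) y i) 0) *
      todaPsi (n + 1) (fun j => b j / 2 + s / 2) fun i : Fin (n + 1) => logCoord (n + 1) y i) := by
  have hyn := hy n (by omega)
  have hlog : ∀ j < n + 1, Real.log (Real.pi * y j) = Real.log Real.pi + Real.log (y j) :=
    fun j h => Real.log_mul Real.pi_ne_zero (hy j h).ne'
  have hsnoc : (fun i : Fin (n + 1 + 1) => logCoord (n + 1) y i) =
      Fin.snoc (α := fun _ => ℝ) (fun i : Fin (n + 1) => logCoord (n + 1) y i) 0 := by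
    funext i
    refine Fin.lastCases ?_ (fun i => ?_) i
    · rw [Fin.snoc_last, Fin.val_last, logCoord_self]
    · rw [Fin.snoc_castSucc, Fin.val_castSucc]
  have hdiag : (fun i : Fin (n + 1) => logCoord n y i) =
      fun i : Fin (n + 1) => logCoord (n + 1) y i + -(2 * Real.log (Real.pi * y n)) := by
    funext i
    rw [logCoord, logCoord, Finset.sum_Ico_succ_top (Nat.lt_succ_iff.1 i.2)]
    ring
  have hsum : ∑ i : Fin (n + 1), logCoord (n + 1) y i =
      (n + 1) * (n + 2) * Real.log Real.pi +
        2 * ∑ j ∈ Finset.range (n + 1), ((j : ℝ) + 1) * Real.log (y j) := by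
    have h := sum_range_sum_Ico (n + 1) fun j => 2 * Real.log (Real.pi * y j)
    rw [Finset.sum_range_succ, Finset.Ico_self, Finset.sum_empty, add_zero] at h
    rw [Fin.sum_univ_eq_sum_range (fun i => logCoord (n + 1) y i)]
    simp only [logCoord]
    rw [h, Finset.mul_sum]
    have g : ∀ N : ℕ, ∑ j ∈ Finset.range N, ((j : ℝ) + 1) * 2 = N * (N + 1) := by
      intro N
      induction N with
      | zero => simp
      | succ N ih => rw [Finset.sum_range_succ, ih]; push_cast; ring
    have g' := g (n + 1)
    push_cast at g'
    rw [show ((n : ℝ) + 1) * (n + 2) = (n + 1) * (n + 1 + 1) by ring, ← g', Finset.sum_mul,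
      ← Finset.sum_add_distrib]
    refine Finset.sum_congr rfl fun j hj => ?_
    rw [hlog j (Finset.mem_range.1 hj)]
    ring
  have hprod : ∏ j ∈ Finset.range (n + 1), (y j : ℂ) ^ (((j + 1 : ℕ) : ℂ) * s) =
      cexp (((∑ j ∈ Finset.range (n + 1), ((j : ℝ) + 1) * Real.log (y j) : ℝ) : ℂ) * s) := by
    push_cast
    rw [Finset.sum_mul, Complex.exp_sum]
    refine Finset.prod_congr rfl fun j hj => ?_
    rw [ofReal_cpow_eq_cexp (hy j (Finset.mem_range.1 hj))]
    ring_nf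
  have hb : ∑ j ∈ Finset.range (n + 1), b j / 2 = sumA (n + 1) b / 2 := by
    rw [sumA, Finset.sum_div]
  rw [WhittAhat, WhittAhat, show n + 2 - 1 = n + 1 from rfl, show n + 1 - 1 = n from rfl, hy1,
    ofReal_one, one_cpow, one_mul, whittAr_succ_eq_todaPsi (n + 1) a y hy,
    whittAr_succ_eq_todaPsi n b y (fun j h => hy j (by omega)), hsnoc, hdiag, todaPsi_add_diag,
    todaPsi_add_const, hprod, hsum, hb, ofReal_cpow_eq_cexp hyn, hlog n (by omega)]
  generalize ∑ j ∈ Finset.range (n + 1), ((j : ℝ) + 1) * Real.log (y j) = S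
  generalize todaPsi (n + 1) _ _ = P
  generalize todaPsi _ _ _ = Q
  have e : ∀ A B C D E F G : ℂ, A + B + C + D + E = F + G →
      cexp A * Q * (cexp B * (cexp C * (cexp D * P))) * cexp E = cexp F * (Q * (cexp G * P)) := by
    intro A B C D E F G h
    have := congrArg cexp h
    simp only [Complex.exp_add] at this
    linear_combination P * Q * this
  refine e _ _ _ _ _ _ _ ?_
  push_cast
  ring

lemma integral_comp_logCoord (n : ℕ) (f : (Fin n → ℝ) → ℂ) :
    (2 : ℂ) ^ n * ∫ u : Fin n → ℝ,
        f (fun i : Fin n => logCoord n (extR fun j => Real.exp (u j)) i) = ∫ x, f x := by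
  let M : Matrix (Fin n) (Fin n) ℝ := fun i j => if i ≤ j then 2 else 0
  have hdet : M.det = 2 ^ n := by
    rw [Matrix.det_of_isUpperTriangular]
    · simp [M]
    · intro i j h
      simpa [M] using h
  have hM : M.det ≠ 0 := by rw [hdet]; positivity
  have hlog : ∀ u : Fin n → ℝ, (fun i : Fin n => logCoord n (extR fun j => Real.exp (u j)) i) =
      Matrix.toLin' M (u + fun _ => Real.log Real.pi) := by
    intro u
    funext i
    rw [Matrix.toLin'_apply, Matrix.mulVec, dotProduct, logCoord,
      show Finset.Ico (i : ℕ) n = (Finset.range n).filter (fun j => (i : ℕ) ≤ j) by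
        ext j; simp [and_comm], Finset.sum_filter, Finset.sum_range]
    refine Finset.sum_congr rfl fun j _ => ?_
    simp only [M, Fin.le_def, ite_mul, zero_mul, extR_val]
    rw [Real.log_mul Real.pi_ne_zero (Real.exp_pos _).ne', Real.log_exp, Pi.add_apply,
      add_comm (u j)]
  have hemb : MeasurableEmbedding (Matrix.toLin' M) :=
    (Matrix.toLin' M).continuous_of_finiteDimensional.measurableEmbedding <| by
      rw [← LinearMap.ker_eq_bot]
      exact LinearMap.ker_eq_bot_of_injective (Matrix.mulVec_injective_of_isUnit
        ((Matrix.isUnit_iff_isUnit_det M).2 hM.isUnit))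
  simp only [hlog]
  rw [integral_add_right_eq_self (fun u => f (Matrix.toLin' M u)), ← hemb.integral_map,
    Real.map_matrix_volume_pi_eq_smul_volume_pi hM, integral_smul_measure, hdet,
    ENNReal.toReal_ofReal (abs_nonneg _), abs_of_pos (by positivity), real_smul]
  push_cast
  rw [← mul_assoc, mul_inv_cancel₀ (pow_ne_zero _ two_ne_zero), one_mul]

lemma prod_GammaR (n m : ℕ) (a b : ℕ → ℂ) (s : ℂ) :
    ∏ j ∈ Finset.range n, ∏ k ∈ Finset.range m, GammaR (s + a j + b k) =
      cexp (-Real.log Real.pi * ((m * sumA n a + n * sumA m b + n * m * s) / 2)) *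
      ∏ j ∈ Finset.range n, ∏ k ∈ Finset.range m,
        Complex.Gamma (a j / 2 + (b k / 2 + s / 2)) := by
  have h : ∀ w, GammaR w = cexp (-Real.log Real.pi * w / 2) * Complex.Gamma (w / 2) := fun w => by
    rw [GammaR, ofReal_cpow_eq_cexp Real.pi_pos]
    ring_nf
  simp only [h, Finset.prod_mul_distrib, ← Complex.exp_sum]
  congr 1
  · congr 1
    simp only [← Finset.sum_div, ← Finset.mul_sum, Finset.sum_add_distrib, Finset.sum_const,
      Finset.card_range, nsmul_eq_mul, sumA]
    ring
  · refine Finset.prod_congr rfl fun j _ => Finset.prod_congr rfl fun k _ => ?_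
    ring_nf

/-- The archimedean `GL_n × GL_{n-1}` zeta integral equals its local `L`-factor
(Theorem 2.1(1) of Ishii–Stade). -/
theorem gl_glnminus1_zeta_eq_Lfactor (n : ℕ) (hn : 2 ≤ n)
    (a a' : ℕ → ℂ) (ha : ∀ j < n, (a j).re = 0) (ha' : ∀ k < n - 1, (a' k).re = 0)
    (s : ℂ) (hs : 0 < s.re) :
    zetaGLm n (n - 1) a a' s =
      ∏ j ∈ Finset.range n, ∏ k ∈ Finset.range (n - 1), GammaR (s + a j + a' k) := by
  obtain ⟨m, rfl⟩ : ∃ m, n = m + 2 := ⟨n - 2, by omega⟩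
  change ∀ k < m + 1, (a' k).re = 0 at ha'
  change zetaGLm (m + 2) (m + 1) a a' s =
    ∏ j ∈ Finset.range (m + 2), ∏ k ∈ Finset.range (m + 1), GammaR (s + a j + a' k)
  have hre : ∀ j < m + 1 + 1, ∀ k < m + 1, 0 < (a j / 2 + (a' k / 2 + s / 2)).re := by
    intro j hj k hk
    simp [ha j hj, ha' k hk, hs]
  rw [zetaGLm, prod_GammaR, ← (integral_todaPsi_snoc_mul_todaPsi (m + 1) _ _ hre).2,
    ← integral_comp_logCoord, ← mul_assoc, mul_comm (cexp _), mul_assoc]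
  congr 1
  rw [← integral_const_mul]
  simp only [Finset.prod_div_distrib, div_eq_mul_inv (∏ j ∈ _, (_ : ℂ) ^ (_ : ℂ)), ← mul_assoc]
  rw [setIntegral_posSet (m + 1) fun y => WhittAhat (m + 2) a (extR y) *
    WhittAhat (m + 1) a' (extR y) * ∏ j ∈ Finset.range (m + 1),
      ((extR y j : ℝ) : ℂ) ^ (((j + 1 : ℕ) : ℂ) * s)]
  refine integral_congr_ae (.of_forall fun u => ?_)
  have := whittAhat_mul_whittAhat m a a' s (extR fun i => Real.exp (u i))
    (fun j hj => by rw [extR_of_lt _ hj]; exact Real.exp_pos _) (by simp [extR])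
  refine this.trans ?_
  push_cast
  ring_nf

end
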